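/- Let I be a graded-nil two-sided homogeneous ideal of a G-graded ring R. Then R is graded NR-clean if and only if R/I is graded NR-clean. -/

import Mathlib

/-- An element is homogeneous w.r.t. a grading family `𝒜` if it lies in some component. -/
def Homogeneous {G : Type*} [Group G] {R : Type*} [Ring R]
    (𝒜 : G → AddSubgroup R) (x : R) : Prop := ∃ g, x ∈ 𝒜 g

/-- A graded-regular element: homogeneous `r` with `r = r * a * r` for some homogeneous `a`. -/
def GradedRegular {G : Type*} [Group G] {R : Type*} [Ring R]
    (𝒜 : G → AddSubgroup R) (r : R) : Prop :=
  Homogeneous 𝒜 r ∧ ∃ a : R, Homogeneous 𝒜 a ∧ r = r * a * r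

/-- Graded NR-clean: every homogeneous element is a sum of a graded-regular element
and a homogeneous nilpotent element. -/
def GradedNRClean {G : Type*} [Group G] {R : Type*} [Ring R]
    (𝒜 : G → AddSubgroup R) : Prop :=
  ∀ x : R, Homogeneous 𝒜 x →
    ∃ r n : R, GradedRegular 𝒜 r ∧ Homogeneous 𝒜 n ∧ IsNilpotent n ∧ x = r + n

/-- `𝒜` is a `G`-grading of the ring `R`. -/
structure IsGrading {G : Type*} [Group G] [DecidableEq G] {R : Type*} [Ring R]
    (𝒜 : G → AddSubgroup R) : Prop where
  one_mem : (1 : R) ∈ 𝒜 1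
  mul_mem : ∀ {g h : G} {a b : R}, a ∈ 𝒜 g → b ∈ 𝒜 h → a * b ∈ 𝒜 (g * h)
  isInternal : DirectSum.IsInternal 𝒜

namespace Stmt7Aux

variable {G : Type*} [Group G] [DecidableEq G] {R : Type*} [Ring R]

theorem mk_eq_iff (I : TwoSidedIdeal R) (x y : R) :
    (I.ringCon.mk' x = I.ringCon.mk' y) ↔ x - y ∈ I := by
  rw [← TwoSidedIdeal.rel_iff]
  exact RingCon.eq _

theorem pow_mem' {𝒜 : G → AddSubgroup R} (hG : IsGrading 𝒜) {g : G} {x : R} (hx : x ∈ 𝒜 g) (n : ℕ) :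
    x ^ n ∈ 𝒜 (g ^ n) := by
  induction n with
  | zero => simpa using hG.one_mem
  | succ k ih => rw [pow_succ, pow_succ]; exact hG.mul_mem ih hx

theorem closure_homog {𝒜 : G → AddSubgroup R} (hG : IsGrading 𝒜) (x : R) :
    x ∈ AddSubgroup.closure {y | Homogeneous 𝒜 y} := by
  let _ := hG.isInternal.chooseDecomposition
  classical
  rw [← DirectSum.sum_support_decompose 𝒜 x]
  exact AddSubgroup.sum_mem _ fun i _ => AddSubgroup.subset_closure ⟨i, (DirectSum.decompose 𝒜 x i).2⟩

theorem ideal_closure {𝒜 : G → AddSubgroup R} (hG : IsGrading 𝒜) (I : TwoSidedIdeal R)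
    (hIhom : ∃ S : Set R, (∀ s ∈ S, Homogeneous 𝒜 s) ∧ I = TwoSidedIdeal.span S) {x : R} (hx : x ∈ I) :
    x ∈ AddSubgroup.closure {y | Homogeneous 𝒜 y ∧ y ∈ I} := by
  obtain ⟨S, hS, hI⟩ := hIhom
  have hSI : ∀ s ∈ S, s ∈ I := fun s hs => hI ▸ TwoSidedIdeal.subset_span hs
  have L : ∀ y t, t ∈ AddSubgroup.closure {y | Homogeneous 𝒜 y ∧ y ∈ I} →
      y * t ∈ AddSubgroup.closure {y | Homogeneous 𝒜 y ∧ y ∈ I} := by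
    intro y t ht
    induction ht using AddSubgroup.closure_induction with
    | mem t ht =>
      obtain ⟨⟨g, hg⟩, htI⟩ := ht
      induction closure_homog hG y using AddSubgroup.closure_induction with
      | mem y hy =>
        obtain ⟨h, hh⟩ := hy
        exact AddSubgroup.subset_closure ⟨⟨_, hG.mul_mem hh hg⟩, I.mul_mem_left _ _ htI⟩
      | zero => simp
      | add a b _ _ ha hb => rw [add_mul]; exact add_mem ha hb
      | neg a _ ha => rw [neg_mul]; exact neg_mem ha
    | zero => simp
    | add a b _ _ ha hb => rw [mul_add]; exact add_mem ha hb
    | neg a _ ha => rw [mul_neg]; exact neg_mem ha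
  have Rt : ∀ y t, t ∈ AddSubgroup.closure {y | Homogeneous 𝒜 y ∧ y ∈ I} →
      t * y ∈ AddSubgroup.closure {y | Homogeneous 𝒜 y ∧ y ∈ I} := by
    intro y t ht
    induction ht using AddSubgroup.closure_induction with
    | mem t ht =>
      obtain ⟨⟨g, hg⟩, htI⟩ := ht
      induction closure_homog hG y using AddSubgroup.closure_induction with
      | mem y hy =>
        obtain ⟨h, hh⟩ := hy
        exact AddSubgroup.subset_closure ⟨⟨_, hG.mul_mem hg hh⟩, I.mul_mem_right _ _ htI⟩
      | zero => simp
      | add a b _ _ ha hb => rw [mul_add]; exact add_mem ha hb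
      | neg a _ ha => rw [mul_neg]; exact neg_mem ha
    | zero => simp
    | add a b _ _ ha hb => rw [add_mul]; exact add_mem ha hb
    | neg a _ ha => rw [neg_mul]; exact neg_mem ha
  let J : TwoSidedIdeal R := TwoSidedIdeal.mk'
    (AddSubgroup.closure {y | Homogeneous 𝒜 y ∧ y ∈ I} : Set R)
    (zero_mem _) (fun ha hb => add_mem ha hb) (fun ha => neg_mem ha)
    (fun {a b} hb => L a b hb) (fun {a b} ha => Rt b a ha)
  have hJ : ∀ z, z ∈ J ↔ z ∈ AddSubgroup.closure {y | Homogeneous 𝒜 y ∧ y ∈ I} := by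
    intro z
    exact TwoSidedIdeal.mem_mk' _ _ _ _ _ _ _
  rw [← hJ]
  have : TwoSidedIdeal.span S ≤ J := by
    rw [TwoSidedIdeal.span_le]
    intro s hs
    exact (hJ s).2 (AddSubgroup.subset_closure ⟨hS s hs, hSI s hs⟩)
  exact this (hI ▸ hx)

/-- If `x ∈ 𝒜 g`, `r ∈ 𝒜 h`, `n ∈ 𝒜 k` and `x - (r + n) ∈ I`, with `g ≠ h` and `g ≠ k`, then `x ∈ I`. -/
theorem sep {𝒜 : G → AddSubgroup R} (hG : IsGrading 𝒜) (I : TwoSidedIdeal R)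
    (hIhom : ∃ S : Set R, (∀ s ∈ S, Homogeneous 𝒜 s) ∧ I = TwoSidedIdeal.span S)
    {g h k : G} {x r n : R} (hx : x ∈ 𝒜 g) (hr : r ∈ 𝒜 h) (hn : n ∈ 𝒜 k)
    (hI : x - (r + n) ∈ I) (h1 : h ≠ g) (h2 : k ≠ g) : x ∈ I := by
  let _ := hG.isInternal.chooseDecomposition
  have key : ∀ y ∈ AddSubgroup.closure {y | Homogeneous 𝒜 y ∧ y ∈ I},
      (DirectSum.decompose 𝒜 y g : R) ∈ I := by
    intro y hy
    induction hy using AddSubgroup.closure_induction with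
    | mem t ht =>
      obtain ⟨⟨l, hl⟩, htI⟩ := ht
      by_cases hlg : l = g
      · subst hlg; rwa [DirectSum.decompose_of_mem_same 𝒜 hl]
      · rw [DirectSum.decompose_of_mem_ne 𝒜 hl hlg]; exact I.zero_mem
    | zero => simpa using I.zero_mem
    | add a b _ _ ha hb => simpa using I.add_mem ha hb
    | neg a _ ha => rw [DirectSum.decompose_neg]; exact I.neg_mem ha
  have := key _ (ideal_closure hG I hIhom hI)
  rw [DirectSum.decompose_sub, DirectSum.decompose_add] at this
  simpa [DirectSum.decompose_of_mem_same 𝒜 hx, DirectSum.decompose_of_mem_ne 𝒜 hr h1,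
    DirectSum.decompose_of_mem_ne 𝒜 hn h2] using this

/-- Lifting a graded-regular element modulo a graded-nil ideal. -/
theorem lift_reg {𝒜 : G → AddSubgroup R} (hG : IsGrading 𝒜) (I : TwoSidedIdeal R)
    (hIhom : ∃ S : Set R, (∀ s ∈ S, Homogeneous 𝒜 s) ∧ I = TwoSidedIdeal.span S)
    (hnil : ∀ a ∈ I, Homogeneous 𝒜 a → IsNilpotent a)
    {h m : G} {r a : R} (hr : r ∈ 𝒜 h) (ha : a ∈ 𝒜 m) (hI : r - r * a * r ∈ I) :
    ∃ r' ∈ 𝒜 h, GradedRegular 𝒜 r' ∧ r - r' ∈ I := by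
  by_cases hm : h * m = 1
  swap
  · have : r ∈ I := by
      refine sep hG I hIhom hr (hG.mul_mem (hG.mul_mem hr ha) hr) (zero_mem (𝒜 (h * m * h)))
        (by simpa using hI) ?_ ?_ <;> simpa using hm
    exact ⟨0, zero_mem _, ⟨⟨h, zero_mem _⟩, 0, ⟨h, zero_mem _⟩, by simp⟩, by simpa using this⟩
  let S : Subring R :=
    { 𝒜 1 with
      mul_mem' := fun {x y} hx hy => by simpa using hG.mul_mem hx hy
      one_mem' := hG.one_mem }
  have he : r * a ∈ 𝒜 1 := hm ▸ hG.mul_mem hr ha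
  let e : S := ⟨r * a, he⟩
  have hmS : ∀ s : S, (s : R) ∈ 𝒜 1 := fun s => s.2
  have heI : ((e * (1 - e) : S) : R) ∈ I := by
    have := I.mul_mem_right _ a hI
    have h2 : ((e * (1 - e) : S) : R) = (r - r * a * r) * a := by
      change r * a * (1 - r * a) = _; noncomm_ring
    rwa [h2]
  obtain ⟨N, hN⟩ := hnil _ heI ⟨1, hmS _⟩
  have hN' : (e * (1 - e)) ^ (N + 1) = 0 := by
    apply Subtype.ext
    rw [pow_succ]
    simp only [Subring.coe_mul, Subring.coe_pow] at hN ⊢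
    rw [hN]; simp
  have hcop : IsCoprime ((Polynomial.X : Polynomial ℤ) ^ (N + 1)) ((1 - Polynomial.X) ^ (N + 1)) :=
    IsCoprime.pow ⟨1, 1, by ring⟩
  obtain ⟨u, v, huv⟩ := hcop
  let φ := Polynomial.aeval (R := ℤ) e
  have hφX : φ Polynomial.X = e := Polynomial.aeval_X _
  -- the idempotent is `e * p`
  let p : S := φ (Polynomial.X ^ N * u)
  let f : S := φ (u * Polynomial.X ^ (N + 1))
  have hf : f = e * p := by
    have h0 : e * p = φ (Polynomial.X * (Polynomial.X ^ N * u)) := by rw [map_mul, hφX]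
    rw [h0]; simp only [f]; congr 1; ring
  have h1f : 1 - f = φ (v * (1 - Polynomial.X) ^ N) * (1 - e) := by
    have : (1 : S) - e = φ (1 - Polynomial.X) := by rw [map_sub, map_one, hφX]
    rw [this, ← map_mul]
    simp only [f]
    rw [← map_one φ, ← map_sub]
    congr 1
    linear_combination -huv
  have hff : f * f = f := by
    have h0 : f * (1 - f) = φ (u * v) * (e * (1 - e)) ^ (N + 1) := by
      have : e * (1 - e) = φ (Polynomial.X * (1 - Polynomial.X)) := by
        rw [map_mul, map_sub, map_one, hφX]
      rw [this, ← map_pow, ← map_mul]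
      simp only [f]
      nth_rw 1 [← map_one φ]
      rw [← map_sub, ← map_mul]
      congr 1
      rw [mul_pow]; linear_combination (-u * Polynomial.X ^ (N + 1)) * huv
    rw [hN', mul_zero, mul_sub, mul_one, sub_eq_zero] at h0
    exact h0.symm
  have hffR : (f : R) * f = f := congrArg Subtype.val hff
  have hfR : (f : R) = r * a * p := congrArg Subtype.val hf
  have hfr : (f : R) * r ∈ 𝒜 h := by simpa using hG.mul_mem (hmS f) hr
  refine ⟨f * r, hfr, ⟨⟨h, hfr⟩, a * p, ⟨_, hG.mul_mem ha (hmS p)⟩, ?_⟩, ?_⟩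
  · have : (f : R) * r * (a * p) * (f * r) = f * (r * a * p) * f * r := by noncomm_ring
    rw [this, ← hfR, hffR, hffR]
  · have h3 : (1 : R) - f = (φ (v * (1 - Polynomial.X) ^ N) : S) * (1 - r * a) :=
      congrArg Subtype.val h1f
    have h4 : r - f * r = (1 - (f : R)) * r := by noncomm_ring
    have h5 : (1 - r * a) * r = r - r * a * r := by noncomm_ring
    rw [h4, h3, mul_assoc, h5]
    exact I.mul_mem_left _ _ hI

end Stmt7Aux

/-- For a graded-nil homogeneous two-sided ideal `I`, the ring `R` is graded
NR-clean iff `R/I` (with the induced grading by the images of the components) is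
graded NR-clean. -/
theorem stmt7 {G : Type*} [Group G] [DecidableEq G] {R : Type*} [Ring R]
    (𝒜 : G → AddSubgroup R) (hG : IsGrading 𝒜) (I : TwoSidedIdeal R)
    (hIhom : ∃ S : Set R, (∀ s ∈ S, Homogeneous 𝒜 s) ∧ I = TwoSidedIdeal.span S)
    (hnil : ∀ a ∈ I, Homogeneous 𝒜 a → IsNilpotent a) :
    GradedNRClean 𝒜 ↔
      GradedNRClean (fun g => (𝒜 g).map (I.ringCon.mk' : R →+* _).toAddMonoidHom) := by
  have hnil' : ∀ (x : R) (g : G) (N : ℕ), x ∈ 𝒜 g → x ^ N ∈ I → IsNilpotent x := by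
    intro x g N hx hN
    obtain ⟨M, hM⟩ := hnil _ hN ⟨_, Stmt7Aux.pow_mem' hG hx N⟩
    exact ⟨N * M, by rw [pow_mul, hM]⟩
  have key := Stmt7Aux.mk_eq_iff I
  have keyp : ∀ (x y : R) (N : ℕ), x - y ∈ I → y ^ N ∈ I → x ^ N ∈ I := by
    intro x y N hxy hy
    have h1 := (key x y).2 hxy
    have h2 := (key (y ^ N) 0).2 (by simpa using hy)
    have h3 := (key (x ^ N) 0).1 (by rw [map_pow, h1, ← map_pow, h2])
    simpa using h3
  constructor
  · rintro H _ ⟨g, x, hx, rfl⟩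
    obtain ⟨r, n, ⟨⟨h, hr⟩, a, ⟨m, ha⟩, hra⟩, ⟨k, hn⟩, hnn, hxe⟩ := H x ⟨g, hx⟩
    refine ⟨I.ringCon.mk' r, I.ringCon.mk' n, ⟨⟨h, r, hr, rfl⟩, I.ringCon.mk' a, ⟨m, a, ha, rfl⟩, ?_⟩,
      ⟨k, n, hn, rfl⟩, hnn.map _, ?_⟩
    · rw [← map_mul, ← map_mul, ← hra]
    · rw [← map_add, ← hxe]; rfl
  · rintro H x ⟨g, hx⟩
    obtain ⟨_, _, ⟨⟨h, r, hr, rfl⟩, _, ⟨m, a, ha, rfl⟩, hra⟩, ⟨k, n, hn, rfl⟩, ⟨N, hN⟩, hxe⟩ :=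
      H (I.ringCon.mk' x) ⟨g, x, hx, rfl⟩
    have hxe' : x - (r + n) ∈ I := (key _ _).1 (hxe.trans (map_add I.ringCon.mk' r n).symm)
    have hra' : r - r * a * r ∈ I := (key _ _).1 (by rw [map_mul, map_mul]; exact hra)
    have hN' : n ^ N ∈ I := by
      have := (key (n ^ N) 0).1 (by rw [map_pow, map_zero]; exact hN)
      simpa using this
    by_cases hg : h = g
    · subst hg
      obtain ⟨r', hr', hreg, hrr⟩ := Stmt7Aux.lift_reg hG I hIhom hnil hr ha hra'
      have hxr : x - r' ∈ 𝒜 h := sub_mem hx hr'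
      refine ⟨r', x - r', hreg, ⟨h, hxr⟩, hnil' _ h N hxr (keyp _ n N ?_ hN'), by abel⟩
      have := I.add_mem hxe' hrr
      convert this using 1
      abel
    · have hxn : IsNilpotent x := by
        by_cases hk : k = g
        · have hrI : r ∈ I := by
            subst hk
            refine Stmt7Aux.sep hG I hIhom hr hx (neg_mem hn) ?_ (Ne.symm hg) (Ne.symm hg)
            have := I.neg_mem hxe'
            convert this using 1
            abel
          refine hnil' x g N hx (keyp x n N ?_ hN')
          have := I.add_mem hxe' hrI
          convert this using 1
          abel
        · exact hnil x (Stmt7Aux.sep hG I hIhom hx hr hn hxe' hg hk) ⟨g, hx⟩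
      exact ⟨0, x, ⟨⟨g, zero_mem _⟩, 0, ⟨g, zero_mem _⟩, by simp⟩, ⟨g, hx⟩, hxn, by simp⟩
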